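/- There is a universal constant c₂ > 0 such that the following holds. Let ε ∈ (0,1), n ≥ 2, and let q be an integer with q ≥ c₂ k² (log n)/ε⁴. Then with probability at least 1 − n^{−3} over the random samples, simultaneously for all k-clusterings C' of V and all i₁, i₂, j ∈ [k] with i₁ < i₂: |F_{i₁,i₂,j}(C') − F̂_{i₁,i₂,j}(C')| ≤ ε · max{ |C_{i₁ j} × C_{i₂ j}|, |C_{i₁ j} × (C_{i₁} \ C_{i₁ j})| / k, |C_{i₂ j} × (C_{i₂} \ C_{i₂ j})| / k }. -/

import Mathlib

open Finset

attribute [local instance] Classical.propDecidable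

/-- A `k`-clustering of `V` is encoded by its cluster-assignment function `Cl : V → Fin k`;
two points are in the same cluster iff they have the same assigned index.
`cluster Cl i` is the `i`-th cluster `C_i`, as a finset. -/
noncomputable def cluster {V : Type*} [Fintype V] {k : ℕ} (Cl : V → Fin k) (i : Fin k) : Finset V :=
  Finset.univ.filter fun v => Cl v = i

/-- `cost_{u,v}(C) = 1[(u,v) ∈ E]·1[u ≢_C v] + 1[(u,v) ∉ E]·1[u ≡_C v]`. -/
noncomputable def costuv {V : Type*} {k : ℕ} (G : SimpleGraph V) (Cl : V → Fin k) (u v : V) : ℝ :=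
  (if G.Adj u v then (if Cl u = Cl v then 0 else 1) else (if Cl u = Cl v then 1 else 0))

/-- `cost(C)`: the number of unordered pairs of distinct points on which the clustering
`Cl` disagrees with the graph `G` (each unordered pair counted once, via half the sum
over ordered pairs). -/
noncomputable def cost {V : Type*} [Fintype V] {k : ℕ} (G : SimpleGraph V) (Cl : V → Fin k) : ℝ :=
  (1 / 2) * ∑ u : V, ∑ v : V, if u ≠ v then costuv G Cl u v else 0

/-- The disagreement distance between two `k`-clusterings:
`d(C,C') = (1/2) Σ_{u ≠ v} (1[u ≡_{C'} v]·1[u ≢_C v] + 1[u ≡_C v]·1[u ≢_{C'} v])`. -/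
noncomputable def dd {V : Type*} [Fintype V] {k : ℕ} (Cl Cl' : V → Fin k) : ℝ :=
  (1 / 2) * ∑ u : V, ∑ v : V, if u ≠ v then
      ((if Cl' u = Cl' v ∧ ¬Cl u = Cl v then (1 : ℝ) else 0) +
        (if Cl u = Cl v ∧ ¬Cl' u = Cl' v then (1 : ℝ) else 0))
    else 0

/-- `f_{u,v}(C') = cost_{u,v}(C') - cost_{u,v}(C)`. -/
noncomputable def fuv {V : Type*} {k : ℕ} (G : SimpleGraph V) (Cl Cl' : V → Fin k) (u v : V) : ℝ :=
  costuv G Cl' u v - costuv G Cl u v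

/-!
On a pair of points that `C` separates and `C'` joins, `f` takes a fixed value `±1` that depends on
neither clustering. So `F - F̂` depends on `C'` only through the sets `A = C_{i₁ j} ⊆ S = C_{i₁}`
and `B = C_{i₂ j} ⊆ D = C_{i₂}`, and a union bound over pairs of subsets suffices. For fixed `A` and
`B`, Bernstein's inequality makes the failure probability at most
`2 / n ^ (12 + min |A| |S \ A| + min |B| |D \ B|)`, which is summable over all `A` and `B`.

The exception is when `S` is tiny compared to `D` and `B` is at most half of `D`: then the allowed
error, which is at least `|B| |D \ B| / k`, only pays for a union bound over `B`. In that case the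
points sampled for `S` hit `B` so rarely, with sufficiently high probability, that the trivial bound
on the error is good enough for all `A` at once.
-/

open scoped BigOperators

section Uniform

variable {Ω : Type*} [Fintype Ω]

theorem dens_filter_exists_mem_le {ι : Type*} (s : Finset ι) (p : ι → Ω → Prop)
    [∀ i, DecidablePred (p i)] [DecidablePred fun ω => ∃ i ∈ s, p i ω] :
    (dens {ω : Ω | ∃ i ∈ s, p i ω} : ℝ) ≤ ∑ i ∈ s, (dens {ω : Ω | p i ω} : ℝ) := by
  have hunion : ({ω | ∃ i ∈ s, p i ω} : Finset Ω) = s.biUnion fun i => {ω | p i ω} := by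
    ext; simp
  simp_rw [hunion, nnratCast_dens, ← sum_div]
  gcongr
  exact_mod_cast card_biUnion_le

theorem dens_filter_le_dens_filter {p p' : Ω → Prop} [DecidablePred p]
    [DecidablePred p'] (h : ∀ ω, p ω → p' ω) :
    (dens {ω : Ω | p ω} : ℝ) ≤ dens {ω : Ω | p' ω} := by
  exact_mod_cast dens_le_dens (monotone_filter_right _ fun ω _ => h ω)

theorem one_sub_le_dens_filter [Nonempty Ω] {p : Ω → Prop} [DecidablePred p] {δ : ℝ}
    (h : (dens {ω : Ω | ¬p ω} : ℝ) ≤ δ) : 1 - δ ≤ dens {ω : Ω | p ω} := by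
  have hsum : (dens {ω : Ω | p ω} + dens {ω : Ω | ¬p ω} : ℝ) = 1 := by
    exact_mod_cast (dens_filter_add_dens_filter_not_eq_dens p).trans dens_univ
  linarith

theorem dens_filter_mul_exp_le_expect_exp (X : Ω → ℝ) (t : ℝ) :
    (dens {ω : Ω | t ≤ X ω} : ℝ) * Real.exp t ≤ 𝔼 ω, Real.exp (X ω) := by
  rw [nnratCast_dens, Fintype.expect_eq_sum_div_card, div_mul_eq_mul_div]
  gcongr
  calc (#{ω | t ≤ X ω} : ℝ) * Real.exp t = ∑ ω with t ≤ X ω, Real.exp t := by simp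
    _ ≤ ∑ ω with t ≤ X ω, Real.exp (X ω) := by
      gcongr with ω hω
      exact (mem_filter.1 hω).2
    _ ≤ ∑ ω, Real.exp (X ω) :=
      sum_le_sum_of_subset_of_nonneg (filter_subset _ _) fun _ _ _ => (Real.exp_pos _).le

theorem expect_pi_prod {ι : Type*} [Fintype ι] [DecidableEq ι] {α : ι → Type*} [∀ i, Fintype (α i)]
    [∀ i, Nonempty (α i)] (s : Finset ι) (f : ∀ i, α i → ℝ) :
    𝔼 ω : ∀ i, α i, ∏ i ∈ s, f i (ω i) = ∏ i ∈ s, 𝔼 x, f i x := by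
  let F (i : ι) (x : α i) : ℝ := if i ∈ s then f i x else 1
  calc 𝔼 ω : ∀ i, α i, ∏ i ∈ s, f i (ω i) = 𝔼 ω : ∀ i, α i, ∏ i, F i (ω i) := by
        simp only [F, prod_ite_mem, univ_inter]
    _ = ∏ i, 𝔼 x, F i x := by
        simp only [Fintype.expect_eq_sum_div_card, prod_div_distrib, Fintype.card_pi,
          Fintype.prod_sum, Nat.cast_prod]
    _ = ∏ i, if i ∈ s then 𝔼 x, f i x else 1 := by
        refine prod_congr rfl fun i _ => ?_
        by_cases hi : i ∈ s <;> simp [F, hi]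
    _ = ∏ i ∈ s, 𝔼 x, f i x := by rw [prod_ite_mem, univ_inter]

/-- The random variable `Y` on the uniform probability space `Ω` has the moment generating function
bound of Bernstein's inequality, with mean `μ` and variance proxy `v`. The range `|l| ≤ 1` of the
exponents is the one available for sums of variables bounded by `1`. -/
def IsSubexponential (Y : Ω → ℝ) (μ v : ℝ) : Prop :=
  ∀ l : ℝ, |l| ≤ 1 → 𝔼 ω, Real.exp (l * (Y ω - μ)) ≤ Real.exp (l ^ 2 * v)

namespace IsSubexponential

variable {Y : Ω → ℝ} {μ v : ℝ}

theorem of_abs_le_one (hY : ∀ ω, |Y ω| ≤ 1) :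
    IsSubexponential Y (𝔼 ω, Y ω) (𝔼 ω, Y ω ^ 2) := by
  intro l hl
  cases isEmpty_or_nonempty Ω
  · simp
  have hexp (ω : Ω) : Real.exp (l * Y ω) ≤ 1 + l * Y ω + l ^ 2 * Y ω ^ 2 := by
    have hlY : |l * Y ω| ≤ 1 := abs_mul l (Y ω) ▸ mul_le_one₀ hl (abs_nonneg _) (hY ω)
    linarith [(abs_le.1 (Real.abs_exp_sub_one_sub_id_le hlY)).2, mul_pow l (Y ω) 2]
  calc 𝔼 ω, Real.exp (l * (Y ω - 𝔼 ω, Y ω))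
      = (𝔼 ω, Real.exp (l * Y ω)) * Real.exp (-(l * 𝔼 ω, Y ω)) := by
        simp_rw [expect_mul, ← Real.exp_add, mul_sub, sub_eq_add_neg]
    _ ≤ (𝔼 ω, (1 + l * Y ω + l ^ 2 * Y ω ^ 2)) * Real.exp (-(l * 𝔼 ω, Y ω)) := by
        gcongr with ω
        exact hexp ω
    _ = (l * 𝔼 ω, Y ω + l ^ 2 * 𝔼 ω, Y ω ^ 2 + 1) * Real.exp (-(l * 𝔼 ω, Y ω)) := by
        rw [expect_add_distrib, expect_add_distrib, Fintype.expect_one, mul_expect, mul_expect]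
        ring
    _ ≤ Real.exp (l * 𝔼 ω, Y ω + l ^ 2 * 𝔼 ω, Y ω ^ 2) * Real.exp (-(l * 𝔼 ω, Y ω)) := by
        gcongr
        exact Real.add_one_le_exp _
    _ = Real.exp (l ^ 2 * 𝔼 ω, Y ω ^ 2) := by
        rw [← Real.exp_add]
        ring_nf

theorem mono (h : IsSubexponential Y μ v) {v' : ℝ} (hv : v ≤ v') : IsSubexponential Y μ v' :=
  fun l hl => (h l hl).trans (by gcongr)

theorem neg (h : IsSubexponential Y μ v) : IsSubexponential (fun ω => -Y ω) (-μ) v := by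
  intro l hl
  simpa only [neg_sq, neg_mul_comm, neg_sub_neg, neg_sub] using h (-l) (by rwa [abs_neg])

section Pi

variable {ι : Type*} [Fintype ι] [DecidableEq ι] {α : ι → Type*} [∀ i, Fintype (α i)]

theorem sum_pi {s : Finset ι} {X : ∀ i, α i → ℝ} {μ v : ι → ℝ}
    (h : ∀ i ∈ s, IsSubexponential (X i) (μ i) (v i)) :
    IsSubexponential (fun ω : ∀ i, α i => ∑ i ∈ s, X i (ω i)) (∑ i ∈ s, μ i) (∑ i ∈ s, v i) := by
  intro l hl
  cases isEmpty_or_nonempty (∀ i, α i)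
  · simpa using (Real.exp_pos _).le
  have := Classical.nonempty_pi.1 ‹Nonempty (∀ i, α i)›
  calc 𝔼 ω : ∀ i, α i, Real.exp (l * (∑ i ∈ s, X i (ω i) - ∑ i ∈ s, μ i))
      = ∏ i ∈ s, 𝔼 x, Real.exp (l * (X i x - μ i)) := by
        simp_rw [← sum_sub_distrib, mul_sum, Real.exp_sum]
        exact expect_pi_prod s fun i x => Real.exp (l * (X i x - μ i))
    _ ≤ ∏ i ∈ s, Real.exp (l ^ 2 * v i) :=
        prod_le_prod (fun _ _ => expect_nonneg fun _ _ => (Real.exp_pos _).le)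
          fun i hi => h i hi l hl
    _ = Real.exp (l ^ 2 * ∑ i ∈ s, v i) := by rw [mul_sum, Real.exp_sum]

theorem comp_eval {i : ι} {Y : α i → ℝ} {μ v : ℝ} (h : IsSubexponential Y μ v) :
    IsSubexponential (fun ω : ∀ i, α i => Y (ω i)) μ v := by
  let X : ∀ j, α j → ℝ := Pi.single i Y
  have hX : ∀ j ∈ ({i} : Finset ι), IsSubexponential (X j) μ v := by
    simpa [X] using h
  simpa [X] using sum_pi (X := X) (μ := fun _ => μ) (v := fun _ => v) hX

end Pi

theorem dens_le_exp (h : IsSubexponential Y μ v) {l : ℝ} (hl0 : 0 ≤ l) (hl1 : l ≤ 1) (t : ℝ) :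
    (dens {ω : Ω | t ≤ Y ω - μ} : ℝ) ≤ Real.exp (l ^ 2 * v - l * t) := by
  have hscale : (dens {ω : Ω | t ≤ Y ω - μ} : ℝ) ≤ dens {ω : Ω | l * t ≤ l * (Y ω - μ)} :=
    dens_filter_le_dens_filter fun ω hω => mul_le_mul_of_nonneg_left hω hl0
  rw [Real.exp_sub, le_div_iff₀ (Real.exp_pos _)]
  calc (dens {ω : Ω | t ≤ Y ω - μ} : ℝ) * Real.exp (l * t)
      ≤ dens {ω : Ω | l * t ≤ l * (Y ω - μ)} * Real.exp (l * t) := by grw [hscale]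
    _ ≤ 𝔼 ω, Real.exp (l * (Y ω - μ)) := dens_filter_mul_exp_le_expect_exp _ _
    _ ≤ Real.exp (l ^ 2 * v) := h l (by rwa [abs_of_nonneg hl0])

theorem dens_le_two_mul_exp (h : IsSubexponential Y μ v) {ε : ℝ} (hε0 : 0 ≤ ε) (hε2 : ε ≤ 2) :
    (dens {ω : Ω | ε * v ≤ |Y ω - μ|} : ℝ) ≤ 2 * Real.exp (-(ε ^ 2 * v / 4)) := by
  have tail {X : Ω → ℝ} {m : ℝ} (hX : IsSubexponential X m v) :
      (dens {ω : Ω | ε * v ≤ X ω - m} : ℝ) ≤ Real.exp (-(ε ^ 2 * v / 4)) := by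
    convert hX.dens_le_exp (l := ε / 2) (by linarith) (by linarith) (ε * v) using 2
    ring
  have hsub : ({ω | ε * v ≤ |Y ω - μ|} : Finset Ω) ⊆
      ({ω | ε * v ≤ Y ω - μ} : Finset Ω) ∪ ({ω | ε * v ≤ -Y ω - -μ} : Finset Ω) := by
    intro ω
    simp [le_abs, neg_add_eq_sub]
  have hunion : (dens {ω : Ω | ε * v ≤ |Y ω - μ|} : ℝ) ≤
      dens {ω : Ω | ε * v ≤ Y ω - μ} + dens {ω : Ω | ε * v ≤ -Y ω - -μ} := by
    exact_mod_cast (dens_le_dens hsub).trans (dens_union_le _ _)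
  linarith [tail h, tail h.neg]

end IsSubexponential

end Uniform

section Samples

variable {V : Type*} {k q : ℕ} {Cl : V → Fin k}

/-- The sample space: `ω u i s` is the `s`-th of the `q` points drawn from the cluster `i` for the
vertex `u`. -/
abbrev Samples (Cl : V → Fin k) (q : ℕ) : Type _ :=
  ∀ _u : V, ∀ i : Fin k, Fin q → {v : V // Cl v = i}

/-- The sum of the weights `g u v` over `u ∈ A` and the points `v` sampled for `u` from the
cluster `i` that fall into `B`, counted with multiplicity. -/
noncomputable def sampleSum (g : V → V → ℝ) (i : Fin k) (A B : Finset V) (ω : Samples Cl q) : ℝ :=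
  ∑ u ∈ A, ∑ s : Fin q, if (ω u i s).1 ∈ B then g u (ω u i s).1 else 0

variable {g : V → V → ℝ} {i : Fin k} {A B S : Finset V} {ω : Samples Cl q}

theorem abs_sampleSum_le (hg : ∀ u v, |g u v| ≤ 1) (hA : A ⊆ S) :
    |sampleSum g i A B ω| ≤ sampleSum (fun _ _ => 1) i S B ω :=
  calc |sampleSum g i A B ω|
      ≤ ∑ u ∈ A, ∑ s : Fin q, |if (ω u i s).1 ∈ B then g u (ω u i s).1 else 0| :=
        (abs_sum_le_sum_abs _ _).trans (sum_le_sum fun u _ => abs_sum_le_sum_abs _ _)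
    _ ≤ ∑ u ∈ A, ∑ s : Fin q, if (ω u i s).1 ∈ B then 1 else 0 := by
        gcongr with u _ s
        split_ifs
        · exact hg _ _
        · simp
    _ ≤ sampleSum (fun _ _ => 1) i S B ω :=
        sum_le_sum_of_subset_of_nonneg hA fun u _ _ =>
          sum_nonneg fun s _ => ite_nonneg zero_le_one le_rfl

variable [Fintype V]

/-- The error `F - F̂` of estimating the total weight `F` of the pairs in `A × B` by
rescaling `sampleSum`. -/
noncomputable def samplingError (g : V → V → ℝ) (i : Fin k) (A B : Finset V)
    (ω : Samples Cl q) : ℝ :=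
  (∑ u ∈ A, ∑ v ∈ B, g u v) - #(cluster Cl i) / q * sampleSum g i A B ω

theorem samplingError_congr {g' : V → V → ℝ} (h : ∀ u ∈ A, ∀ v ∈ B, g u v = g' u v) :
    samplingError g i A B ω = samplingError g' i A B ω := by
  have hsample : sampleSum g i A B ω = sampleSum g' i A B ω :=
    sum_congr rfl fun u hu => sum_congr rfl fun _ _ => ite_congr rfl (h u hu _) fun _ => rfl
  rw [samplingError, samplingError, hsample, sum_congr rfl fun u hu => sum_congr rfl (h u hu)]

theorem abs_samplingError_eq (hq : 0 < q) (hi : (cluster Cl i).Nonempty) :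
    |samplingError g i A B ω| = #(cluster Cl i) / q *
      |sampleSum g i A B ω - q / #(cluster Cl i) * ∑ u ∈ A, ∑ v ∈ B, g u v| := by
  have : (0 : ℝ) < #(cluster Cl i) := by exact_mod_cast hi.card_pos
  have : (0 : ℝ) < q := by exact_mod_cast hq
  have heq : samplingError g i A B ω = -(#(cluster Cl i) / q *
      (sampleSum g i A B ω - q / #(cluster Cl i) * ∑ u ∈ A, ∑ v ∈ B, g u v)) := by
    rw [samplingError]
    field_simp
    ring
  rw [heq, abs_neg, abs_mul, abs_of_pos (by positivity)]

theorem abs_samplingError_le (hg : ∀ u v, |g u v| ≤ 1) (hA : A ⊆ S) :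
    |samplingError g i A B ω| ≤
      #S * #B + #(cluster Cl i) / q * sampleSum (fun _ _ => 1) i S B ω := by
  have hF : |∑ u ∈ A, ∑ v ∈ B, g u v| ≤ #S * #B :=
    calc |∑ u ∈ A, ∑ v ∈ B, g u v| ≤ ∑ u ∈ A, ∑ v ∈ B, |g u v| :=
          (abs_sum_le_sum_abs _ _).trans (sum_le_sum fun u _ => abs_sum_le_sum_abs _ _)
      _ ≤ ∑ _u ∈ A, ∑ _v ∈ B, (1 : ℝ) := by gcongr; exact hg _ _
      _ = #A * #B := by simp
      _ ≤ #S * #B := by gcongr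
  refine (abs_sub _ _).trans ?_
  rw [abs_mul, abs_of_nonneg (by positivity : (0 : ℝ) ≤ #(cluster Cl i) / q)]
  gcongr
  exact abs_sampleSum_le hg hA

theorem expect_cluster_ite (hB : B ⊆ cluster Cl i) (h : V → ℝ) :
    𝔼 x : {v : V // Cl v = i}, (if x.1 ∈ B then h x.1 else 0) =
      (∑ v ∈ B, h v) / #(cluster Cl i) := by
  have hmem (v : V) : v ∈ cluster Cl i ↔ Cl v = i := by simp [cluster]
  rw [Fintype.expect_eq_sum_div_card, Fintype.card_of_subtype _ hmem,
    ← sum_subtype _ hmem fun v => if v ∈ B then h v else 0, sum_ite_mem, inter_eq_right.2 hB]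

theorem isSubexponential_sample (hB : B ⊆ cluster Cl i) {h : V → ℝ} (hh : ∀ v, |h v| ≤ 1) :
    IsSubexponential (fun x : {v : V // Cl v = i} => if x.1 ∈ B then h x.1 else 0)
      ((∑ v ∈ B, h v) / #(cluster Cl i)) (#B / #(cluster Cl i)) := by
  rw [← expect_cluster_ite hB h]
  refine (IsSubexponential.of_abs_le_one fun x => ?_).mono ?_
  · split_ifs <;> simp [hh]
  · simp only [ite_pow, zero_pow two_ne_zero]
    rw [expect_cluster_ite hB fun v => h v ^ 2]
    gcongr
    rw [card_eq_sum_ones, Nat.cast_sum, Nat.cast_one]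
    gcongr with v
    exact (sq_le_one_iff_abs_le_one _).2 (hh v)

theorem isSubexponential_sum_draws (hB : B ⊆ cluster Cl i) {h : V → ℝ} (hh : ∀ v, |h v| ≤ 1) :
    IsSubexponential
      (fun y : Fin q → {v : V // Cl v = i} => ∑ s, if (y s).1 ∈ B then h (y s).1 else 0)
      (q * ((∑ v ∈ B, h v) / #(cluster Cl i))) (q * (#B / #(cluster Cl i))) := by
  simpa only [sum_const, card_univ, Fintype.card_fin, nsmul_eq_mul] using
    IsSubexponential.sum_pi (s := (univ : Finset (Fin q))) fun _ _ => isSubexponential_sample hB hh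

theorem isSubexponential_sampleSum (hB : B ⊆ cluster Cl i) (hg : ∀ u v, |g u v| ≤ 1) :
    IsSubexponential (fun ω : Samples Cl q => sampleSum g i A B ω)
      (q / #(cluster Cl i) * ∑ u ∈ A, ∑ v ∈ B, g u v) (q * (#A * #B / #(cluster Cl i))) := by
  let X (u : V) (y : ∀ i : Fin k, Fin q → {v : V // Cl v = i}) : ℝ :=
    ∑ s, if (y i s).1 ∈ B then g u (y i s).1 else 0
  have hX (u : V) : IsSubexponential (X u)
      (q * ((∑ v ∈ B, g u v) / #(cluster Cl i))) (q * (#B / #(cluster Cl i))) :=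
    (isSubexponential_sum_draws hB (hg u)).comp_eval (α := fun i => Fin q → {v : V // Cl v = i})
  convert IsSubexponential.sum_pi (s := A) (X := X) fun u _ => hX u using 1
  · rfl
  · rw [← mul_sum, ← sum_div]
    ring
  · rw [sum_const, nsmul_eq_mul]
    ring

end Samples

section MinSide

variable {V : Type*} {S A : Finset V}

/-- The size of the smaller side of the cut `A ∣ S \ A` of `S`. The subsets `A` of `S` are summable
against the weights `n⁻¹ ^ minSide S A`, which is what makes union bounds over them affordable. -/
noncomputable def minSide (S A : Finset V) : ℕ :=
  min #A #(S \ A)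

theorem minSide_mul_card_le (hA : A ⊆ S) : minSide S A * #S ≤ 2 * (#A * #(S \ A)) := by
  have hleft : minSide S A ≤ #A := min_le_left _ _
  have hright : minSide S A ≤ #(S \ A) := min_le_right _ _
  calc minSide S A * #S = minSide S A * #(S \ A) + minSide S A * #A := by
        rw [← card_sdiff_add_card_eq_card hA, mul_add]
    _ ≤ #A * #(S \ A) + #(S \ A) * #A := by gcongr
    _ = 2 * (#A * #(S \ A)) := by ring

theorem sum_powerset_pow_minSide_le (S : Finset V) {x : ℝ} (hx : 0 ≤ x) :
    ∑ A ∈ S.powerset, x ^ minSide S A ≤ 2 * (1 + x) ^ #S :=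
  calc ∑ A ∈ S.powerset, x ^ minSide S A
      ≤ ∑ A ∈ S.powerset, (x ^ #A * 1 ^ (#S - #A) + 1 ^ #A * x ^ (#S - #A)) := by
        refine sum_le_sum fun A hA => ?_
        rw [minSide, card_sdiff_of_subset (mem_powerset.1 hA), one_pow, one_pow, mul_one, one_mul]
        rcases min_choice #A (#S - #A) with h | h <;> rw [h]
        · exact le_add_of_nonneg_right (pow_nonneg hx _)
        · exact le_add_of_nonneg_left (pow_nonneg hx _)
    _ = 2 * (1 + x) ^ #S := by
        rw [sum_add_distrib, sum_pow_mul_eq_add_pow, sum_pow_mul_eq_add_pow, add_comm x, two_mul]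

theorem sum_powerset_inv_pow_minSide_le {n : ℕ} (hn : 0 < n) (hS : #S ≤ n) :
    ∑ A ∈ S.powerset, (n : ℝ)⁻¹ ^ minSide S A ≤ 6 := by
  have hpow : (1 + (n : ℝ)⁻¹) ^ #S ≤ 3 :=
    calc (1 + (n : ℝ)⁻¹) ^ #S ≤ (1 + (n : ℝ)⁻¹) ^ n :=
          pow_le_pow_right₀ (le_add_of_nonneg_right (by positivity)) hS
      _ ≤ Real.exp (n : ℝ)⁻¹ ^ n := by
          gcongr
          exact add_comm 1 (n : ℝ)⁻¹ ▸ Real.add_one_le_exp _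
      _ = Real.exp 1 := by rw [← Real.exp_nat_mul, mul_inv_cancel₀ (by positivity)]
      _ ≤ 3 := by linarith [Real.exp_one_lt_d9]
  linarith [sum_powerset_pow_minSide_le S (x := (n : ℝ)⁻¹) (by positivity)]

end MinSide

theorem exp_neg_le_inv_pow {n N : ℕ} (hn : 0 < n) {x : ℝ} (h : N * Real.log n ≤ x) :
    Real.exp (-x) ≤ (n : ℝ)⁻¹ ^ N := by
  calc Real.exp (-x) ≤ Real.exp (N * -Real.log n) := Real.exp_le_exp.2 (by linarith)
    _ = (n : ℝ)⁻¹ ^ N := by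
        rw [Real.exp_nat_mul, Real.exp_neg, Real.exp_log (by exact_mod_cast hn)]

section ErrorScale

variable {V : Type*} {k : ℕ} {S D A B : Finset V} {ε : ℝ}

/-- The scale of the error allowed when estimating the weight of `A × B`, for `A ⊆ S` and
`B ⊆ D`. -/
noncomputable def errorScale (k : ℕ) (S D A B : Finset V) : ℝ :=
  max (#A * #B) (max (#A * #(S \ A) / k) (#B * #(D \ B) / k))

theorem card_mul_card_le_errorScale : #A * #B ≤ errorScale k S D A B :=
  le_max_left _ _

theorem errorScale_nonneg : 0 ≤ errorScale k S D A B :=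
  le_trans (by positivity) card_mul_card_le_errorScale

theorem card_mul_card_sdiff_le_left (hk : 0 < k) :
    (#A * #(S \ A) : ℝ) ≤ k * errorScale k S D A B := by
  rw [← div_le_iff₀' (by positivity)]
  exact (le_max_left _ _).trans (le_max_right _ _)

theorem card_mul_card_sdiff_le_right (hk : 0 < k) :
    (#B * #(D \ B) : ℝ) ≤ k * errorScale k S D A B := by
  rw [← div_le_iff₀' (by positivity)]
  exact (le_max_right _ _).trans (le_max_right _ _)

theorem minSide_mul_card_le_left (hk : 0 < k) (hA : A ⊆ S) :
    (minSide S A * #S : ℝ) ≤ 2 * k * errorScale k S D A B := by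
  have hcut : (minSide S A * #S : ℝ) ≤ 2 * (#A * #(S \ A)) := by
    exact_mod_cast minSide_mul_card_le hA
  linarith [card_mul_card_sdiff_le_left (S := S) (D := D) (A := A) (B := B) hk]

theorem minSide_mul_card_le_right (hk : 0 < k) (hB : B ⊆ D) :
    (minSide D B * #D : ℝ) ≤ 2 * k * errorScale k S D A B := by
  have hcut : (minSide D B * #D : ℝ) ≤ 2 * (#B * #(D \ B)) := by
    exact_mod_cast minSide_mul_card_le hB
  linarith [card_mul_card_sdiff_le_right (S := S) (D := D) (A := A) (B := B) hk]

theorem card_mul_card_le_of_two_mul_card_le (hk : 0 < k) (hB : B ⊆ D) (h : 2 * #B ≤ #D) :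
    (#D * #B : ℝ) ≤ 2 * k * errorScale k S D A B := by
  have hhalf : (#D : ℝ) ≤ 2 * #(D \ B) := by
    have := card_sdiff_add_card_eq_card hB
    exact_mod_cast (by lia : #D ≤ 2 * #(D \ B))
  calc (#D * #B : ℝ) ≤ 2 * #(D \ B) * #B := by gcongr
    _ = 2 * (#B * #(D \ B)) := by ring
    _ ≤ 2 * (k * errorScale k S D A B) := by
        gcongr _ * ?_
        exact card_mul_card_sdiff_le_right hk
    _ = 2 * k * errorScale k S D A B := by ring

theorem card_le_two_mul_errorScale (hk : 0 < k) (hA : A.Nonempty) (hB : B.Nonempty) (hBD : B ⊆ D) :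
    (#D : ℝ) ≤ 2 * k * errorScale k S D A B := by
  have hk1 : (1 : ℝ) ≤ k := by exact_mod_cast hk
  rcases hBD.eq_or_ssubset with rfl | hssub
  · have hA1 : (1 : ℝ) ≤ #A := by exact_mod_cast hA.card_pos
    calc (#B : ℝ) ≤ #A * #B := le_mul_of_one_le_left (by positivity) hA1
      _ ≤ errorScale k S B A B := card_mul_card_le_errorScale
      _ ≤ 2 * k * errorScale k S B A B := le_mul_of_one_le_left errorScale_nonneg (by linarith)
  · have hside : (1 : ℝ) ≤ minSide D B := by
      exact_mod_cast le_min hB.card_pos (sdiff_nonempty.2 hssub.not_subset).card_pos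
    exact (le_mul_of_one_le_left (by positivity) hside).trans (minSide_mul_card_le_right hk hBD)

/-- The regime in which a union bound over all subsets of `S` is too expensive: `S` is so small
compared to `D` that the allowed error is governed by the cut `B ∣ D \ B` alone. -/
def IsSparse (ε : ℝ) (k : ℕ) (S D B : Finset V) : Prop :=
  2 * #B ≤ #D ∧ 16 * k * #S ≤ ε * #D

theorem mul_minSide_le_of_not_isSparse (hk : 0 < k) (hε1 : ε ≤ 1) (hA : A ⊆ S)
    (hsparse : ¬IsSparse ε k S D B) :
    ε * (minSide S A * #D) ≤ 32 * k ^ 2 * errorScale k S D A B := by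
  have hk1 : (1 : ℝ) ≤ k := by exact_mod_cast hk
  rcases not_and_or.1 hsparse with hBD | hSD
  · have hBD' : (#D : ℝ) ≤ 2 * #B := by exact_mod_cast (not_le.1 hBD).le
    calc ε * (minSide S A * #D) ≤ minSide S A * #D :=
          mul_le_of_le_one_left (by positivity) hε1
      _ ≤ #A * (2 * #B) := by
          gcongr
          exact min_le_left _ _
      _ = 2 * (#A * #B) := by ring
      _ ≤ 2 * errorScale k S D A B := by
          gcongr
          exact card_mul_card_le_errorScale
      _ ≤ 32 * k ^ 2 * errorScale k S D A B := by
          gcongr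
          · exact errorScale_nonneg
          · nlinarith
  · calc ε * (minSide S A * #D) = minSide S A * (ε * #D) := by ring
      _ ≤ minSide S A * (16 * k * #S) := by
          gcongr _ * ?_
          exact (not_le.1 hSD).le
      _ = 16 * k * (minSide S A * #S) := by ring
      _ ≤ 16 * k * (2 * k * errorScale k S D A B) := by
          gcongr _ * ?_
          exact minSide_mul_card_le_left hk hA
      _ = 32 * k ^ 2 * errorScale k S D A B := by ring

theorem mul_add_minSide_le_of_not_isSparse (hk : 0 < k) (hε1 : ε ≤ 1)
    (hA : A ⊆ S) (hB : B ⊆ D) (hA0 : A.Nonempty) (hB0 : B.Nonempty)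
    (hsparse : ¬IsSparse ε k S D B) :
    ε * ((12 + minSide S A + minSide D B) * #D) ≤ 58 * k ^ 2 * errorScale k S D A B := by
  have hone := card_le_two_mul_errorScale (S := S) hk hA0 hB0 hB
  have hright := minSide_mul_card_le_right (S := S) (A := A) hk hB
  have hleft := mul_minSide_le_of_not_isSparse hk hε1 hA hsparse
  have hW := errorScale_nonneg (k := k) (S := S) (D := D) (A := A) (B := B)
  have hscale : k * errorScale k S D A B ≤ k ^ 2 * errorScale k S D A B := by
    gcongr
    exact le_self_pow₀ (by exact_mod_cast hk) two_ne_zero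
  have hε (y : ℝ) (hy : 0 ≤ y) : ε * y ≤ y := mul_le_of_le_one_left hy hε1
  linarith [hε #D (by positivity), hε (minSide D B * #D) (by positivity)]

theorem add_minSide_mul_le_of_not_isSparse {q L : ℝ} (hk : 0 < k) (hε0 : 0 < ε) (hε1 : ε ≤ 1)
    (hL : 0 ≤ L) (hq : 2000 * k ^ 2 * L ≤ ε ^ 4 * q)
    (hA : A ⊆ S) (hB : B ⊆ D) (hA0 : A.Nonempty) (hB0 : B.Nonempty)
    (hsparse : ¬IsSparse ε k S D B) :
    (12 + minSide S A + minSide D B) * L ≤ ε ^ 2 * (q * (errorScale k S D A B / #D)) / 4 := by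
  have hD : (0 : ℝ) < #D := by exact_mod_cast (hB0.mono hB).card_pos
  have hW := errorScale_nonneg (k := k) (S := S) (D := D) (A := A) (B := B)
  refine le_of_mul_le_mul_left ?_ (by positivity : 0 < ε ^ 2 * #D)
  calc ε ^ 2 * #D * ((12 + minSide S A + minSide D B) * L)
      ≤ ε * #D * ((12 + minSide S A + minSide D B) * L) := by
        gcongr
        exact pow_le_of_le_one hε0.le hε1 two_ne_zero
    _ = ε * ((12 + minSide S A + minSide D B) * #D) * L := by ring
    _ ≤ 58 * k ^ 2 * errorScale k S D A B * L := by
        gcongr ?_ * _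
        exact mul_add_minSide_le_of_not_isSparse hk hε1 hA hB hA0 hB0 hsparse
    _ ≤ errorScale k S D A B * (2000 * k ^ 2 * L) / 4 := by
        have : 0 ≤ k ^ 2 * errorScale k S D A B * L := by positivity
        linarith
    _ ≤ errorScale k S D A B * (ε ^ 4 * q) / 4 := by gcongr
    _ = ε ^ 2 * #D * (ε ^ 2 * (q * (errorScale k S D A B / #D)) / 4) := by
        field_simp

theorem add_minSide_mul_le_of_nonempty {q L : ℝ} (hk : 0 < k) (hε0 : 0 ≤ ε)
    (hε1 : ε ≤ 1) (hq0 : 0 ≤ q) (hL : 0 ≤ L)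
    (hq : 2000 * k ^ 2 * L ≤ ε ^ 4 * q) (hB : B.Nonempty) :
    (12 + minSide D B) * L ≤ ε * q * #B / (8 * k) := by
  have hB1 : (1 : ℝ) ≤ #B := by exact_mod_cast hB.card_pos
  have hside : (minSide D B : ℝ) ≤ #B := by exact_mod_cast min_le_left _ _
  rw [le_div_iff₀ (by positivity)]
  calc (12 + minSide D B) * L * (8 * k) ≤ 13 * #B * L * (8 * k) := by
        gcongr
        linarith
    _ = 104 * k * L * #B := by ring
    _ ≤ 2000 * k ^ 2 * L * #B := by
        gcongr
        · norm_num
        · exact le_self_pow₀ (by exact_mod_cast hk) two_ne_zero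
    _ ≤ ε ^ 4 * q * #B := by gcongr
    _ ≤ ε * q * #B := by
        gcongr
        exact pow_le_of_le_one hε0 hε1 four_ne_zero

end ErrorScale

section Misestimation

variable {V : Type*} [Fintype V] {k q : ℕ} {Cl : V → Fin k} {g : V → V → ℝ} {ε : ℝ} {i : Fin k}
  {S A B : Finset V}

/-- The samples `ω` for which the estimate of the weight of `A × B` violates the claimed bound,
where `A ⊆ S` and `B` is contained in the cluster `i`. -/
def IsMisestimated (g : V → V → ℝ) (ε : ℝ) (i : Fin k) (S A B : Finset V) (ω : Samples Cl q) :
    Prop :=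
  ε * errorScale k S (cluster Cl i) A B < |samplingError g i A B ω|

theorem IsMisestimated.nonempty {ω : Samples Cl q} (hε : 0 ≤ ε)
    (h : IsMisestimated g ε i S A B ω) : A.Nonempty ∧ B.Nonempty := by
  have herr : samplingError g i A B ω ≠ 0 :=
    abs_pos.1 ((mul_nonneg hε errorScale_nonneg).trans_lt h)
  constructor <;> refine nonempty_iff_ne_empty.2 ?_ <;> rintro rfl <;>
    simp [samplingError, sampleSum] at herr

theorem IsMisestimated.le_sampleSum_of_isSparse {ω : Samples Cl q} (hε : 0 ≤ ε) (hq : 0 < q)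
    (hg : ∀ u v, |g u v| ≤ 1) (hA : A ⊆ S) (hB : B ⊆ cluster Cl i)
    (hsparse : IsSparse ε k S (cluster Cl i) B) (h : IsMisestimated g ε i S A B ω) :
    ε * q * #B / (4 * k) ≤ sampleSum (fun _ _ => 1) i S B ω := by
  by_contra! hhits
  have hk : 0 < k := i.pos
  let u : ℝ := ε * #(cluster Cl i) * #B / (16 * k)
  have hu : 0 ≤ u := by positivity
  have hSB : #S * #B ≤ u := by
    rw [le_div_iff₀ (by positivity)]
    linarith [mul_le_mul_of_nonneg_right hsparse.2 (Nat.cast_nonneg (α := ℝ) #B)]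
  have hrescaled : #(cluster Cl i) / q * sampleSum (fun _ _ => 1) i S B ω ≤ 4 * u :=
    calc #(cluster Cl i) / q * sampleSum (fun _ _ => 1) i S B ω
        ≤ #(cluster Cl i) / q * (ε * q * #B / (4 * k)) := by gcongr
      _ = 4 * u := by
        simp only [u]
        field_simp
        norm_num
  have hcut : 8 * u ≤ ε * errorScale k S (cluster Cl i) A B := by
    calc 8 * u = ε * (#(cluster Cl i) * #B) / (2 * k) := by
          simp only [u]
          ring
      _ ≤ ε * (2 * k * errorScale k S (cluster Cl i) A B) / (2 * k) := by
          gcongr ε * ?_ / _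
          exact card_mul_card_le_of_two_mul_card_le hk hB hsparse.1
      _ = ε * errorScale k S (cluster Cl i) A B := by field_simp
  linarith [abs_samplingError_le (i := i) (B := B) (ω := ω) hg hA, h.trans_le' hcut]

theorem dens_le_sampleSum_le (hB : B ⊆ cluster Cl i) (hB0 : B.Nonempty)
    (hS : 16 * k * #S ≤ ε * #(cluster Cl i)) :
    (dens {ω : Samples Cl q | ε * q * #B / (4 * k) ≤ sampleSum (fun _ _ => 1) i S B ω} : ℝ) ≤
      Real.exp (-(ε * q * #B / (8 * k))) := by
  have hk : 0 < k := i.pos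
  have hD : (0 : ℝ) < #(cluster Cl i) := by exact_mod_cast (hB0.mono hB).card_pos
  have hmean : q / #(cluster Cl i) * (#S * #B : ℝ) ≤ ε * q * #B / (16 * k) := by
    rw [div_mul_eq_mul_div, div_le_div_iff₀ hD (by positivity)]
    linarith [mul_le_mul_of_nonneg_left hS (by positivity : (0 : ℝ) ≤ q * #B)]
  have hsub := (isSubexponential_sampleSum (q := q) (g := fun _ _ => 1) (A := S) hB
    (by simp)).dens_le_exp zero_le_one le_rfl
      (ε * q * #B / (4 * k) - q / #(cluster Cl i) * (#S * #B))
  simp only [sum_const, nsmul_eq_mul, mul_one, sub_le_sub_iff_right, one_pow, one_mul] at hsub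
  refine hsub.trans (Real.exp_le_exp.2 ?_)
  linarith [
    (by ring : q * (#S * #B / #(cluster Cl i) : ℝ) = q / #(cluster Cl i) * (#S * #B)),
    (by ring : ε * q * #B / (4 * k) = 4 * (ε * q * #B / (16 * k))),
    (by ring : ε * q * #B / (8 * k) = 2 * (ε * q * #B / (16 * k)))]

theorem dens_exists_isMisestimated_le_of_isSparse (hε0 : 0 ≤ ε) (hε1 : ε ≤ 1) (hq0 : 0 < q)
    (hq : 2000 * k ^ 2 * Real.log (Fintype.card V) ≤ ε ^ 4 * q) (hg : ∀ u v, |g u v| ≤ 1)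
    (hB : B ⊆ cluster Cl i) (hsparse : IsSparse ε k S (cluster Cl i) B) :
    (dens {ω : Samples Cl q | ∃ A ∈ S.powerset, IsMisestimated g ε i S A B ω} : ℝ) ≤
      (Fintype.card V : ℝ)⁻¹ ^ (12 + minSide (cluster Cl i) B) := by
  rcases B.eq_empty_or_nonempty with rfl | hB0
  · rw [filter_false_of_mem fun ω _ ⟨A, _, h⟩ => not_nonempty_empty (h.nonempty hε0).2]
    simp
  have hn : 0 < Fintype.card V := Fintype.card_pos_iff.2 ⟨hB0.choose⟩
  calc (dens {ω : Samples Cl q | ∃ A ∈ S.powerset, IsMisestimated g ε i S A B ω} : ℝ)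
      ≤ dens {ω : Samples Cl q | ε * q * #B / (4 * k) ≤ sampleSum (fun _ _ => 1) i S B ω} :=
        dens_filter_le_dens_filter fun ω ⟨A, hA, h⟩ =>
          h.le_sampleSum_of_isSparse hε0 hq0 hg (mem_powerset.1 hA) hB hsparse
    _ ≤ Real.exp (-(ε * q * #B / (8 * k))) := dens_le_sampleSum_le hB hB0 hsparse.2
    _ ≤ (Fintype.card V : ℝ)⁻¹ ^ (12 + minSide (cluster Cl i) B) := by
        refine exp_neg_le_inv_pow hn ?_
        push_cast
        exact add_minSide_mul_le_of_nonempty i.pos hε0 hε1 (Nat.cast_nonneg q)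
          (Real.log_natCast_nonneg _) hq hB0

theorem dens_isMisestimated_le_of_not_isSparse (hε0 : 0 < ε) (hε1 : ε ≤ 1) (hq0 : 0 < q)
    (hq : 2000 * k ^ 2 * Real.log (Fintype.card V) ≤ ε ^ 4 * q) (hg : ∀ u v, |g u v| ≤ 1)
    (hA : A ⊆ S) (hB : B ⊆ cluster Cl i) (hsparse : ¬IsSparse ε k S (cluster Cl i) B) :
    (dens {ω : Samples Cl q | IsMisestimated g ε i S A B ω} : ℝ) ≤
      2 * (Fintype.card V : ℝ)⁻¹ ^ (12 + minSide S A + minSide (cluster Cl i) B) := by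
  by_cases hAB : A.Nonempty ∧ B.Nonempty
  swap
  · rw [filter_false_of_mem fun ω _ h => hAB (h.nonempty hε0.le)]
    simp
  obtain ⟨hA0, hB0⟩ := hAB
  have hn : 0 < Fintype.card V := Fintype.card_pos_iff.2 ⟨hB0.choose⟩
  have hD : (0 : ℝ) < #(cluster Cl i) := by exact_mod_cast (hB0.mono hB).card_pos
  let v : ℝ := q * (errorScale k S (cluster Cl i) A B / #(cluster Cl i))
  have hsub : IsSubexponential (fun ω : Samples Cl q => sampleSum g i A B ω)
      (q / #(cluster Cl i) * ∑ u ∈ A, ∑ v ∈ B, g u v) v :=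
    (isSubexponential_sampleSum hB hg).mono <| by
      simp only [v]
      gcongr
      exact card_mul_card_le_errorScale
  have hdev (ω : Samples Cl q) (h : IsMisestimated g ε i S A B ω) :
      ε * v ≤ |sampleSum g i A B ω - q / #(cluster Cl i) * ∑ u ∈ A, ∑ v ∈ B, g u v| := by
    rw [IsMisestimated, abs_samplingError_eq hq0 (hB0.mono hB)] at h
    refine le_of_mul_le_mul_left ?_ (by positivity : (0 : ℝ) < #(cluster Cl i) / q)
    refine h.le.trans_eq' ?_
    simp only [v]
    field_simp
  calc (dens {ω : Samples Cl q | IsMisestimated g ε i S A B ω} : ℝ)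
      ≤ 2 * Real.exp (-(ε ^ 2 * v / 4)) :=
        (dens_filter_le_dens_filter hdev).trans
          (hsub.dens_le_two_mul_exp hε0.le (hε1.trans one_le_two))
    _ ≤ 2 * (Fintype.card V : ℝ)⁻¹ ^ (12 + minSide S A + minSide (cluster Cl i) B) := by
        gcongr 2 * ?_
        refine exp_neg_le_inv_pow hn ?_
        push_cast
        exact add_minSide_mul_le_of_not_isSparse i.pos hε0 hε1 (Real.log_natCast_nonneg _) hq
          hA hB hA0 hB0 hsparse

theorem dens_exists_isMisestimated_le (hε0 : 0 < ε) (hε1 : ε ≤ 1) (hq0 : 0 < q)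
    (hq : 2000 * k ^ 2 * Real.log (Fintype.card V) ≤ ε ^ 4 * q) (hg : ∀ u v, |g u v| ≤ 1)
    (hn : 0 < Fintype.card V) (hB : B ⊆ cluster Cl i) :
    (dens {ω : Samples Cl q | ∃ A ∈ S.powerset, IsMisestimated g ε i S A B ω} : ℝ) ≤
      12 * (Fintype.card V : ℝ)⁻¹ ^ (12 + minSide (cluster Cl i) B) := by
  let x : ℝ := (Fintype.card V : ℝ)⁻¹
  let b : ℕ := minSide (cluster Cl i) B
  by_cases hsparse : IsSparse ε k S (cluster Cl i) B
  · exact (dens_exists_isMisestimated_le_of_isSparse hε0.le hε1 hq0 hq hg hB hsparse).trans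
      (le_mul_of_one_le_left (by positivity) (by norm_num))
  calc (dens {ω : Samples Cl q | ∃ A ∈ S.powerset, IsMisestimated g ε i S A B ω} : ℝ)
      ≤ ∑ A ∈ S.powerset, (dens {ω : Samples Cl q | IsMisestimated g ε i S A B ω} : ℝ) :=
        dens_filter_exists_mem_le _ _
    _ ≤ ∑ A ∈ S.powerset, 2 * x ^ (12 + minSide S A + b) :=
        sum_le_sum fun A hA => dens_isMisestimated_le_of_not_isSparse hε0 hε1 hq0 hq hg
          (mem_powerset.1 hA) hB hsparse
    _ = 2 * x ^ (12 + b) * ∑ A ∈ S.powerset, x ^ minSide S A := by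
        rw [mul_sum]
        exact sum_congr rfl fun A _ => by ring
    _ ≤ 2 * x ^ (12 + b) * 6 := by
        gcongr
        exact sum_powerset_inv_pow_minSide_le hn (card_le_univ S)
    _ = 12 * x ^ (12 + b) := by ring

theorem dens_exists_exists_isMisestimated_le (hε0 : 0 < ε) (hε1 : ε ≤ 1) (hq0 : 0 < q)
    (hq : 2000 * k ^ 2 * Real.log (Fintype.card V) ≤ ε ^ 4 * q) (hg : ∀ u v, |g u v| ≤ 1)
    (hn : 0 < Fintype.card V) :
    (dens {ω : Samples Cl q | ∃ B ∈ (cluster Cl i).powerset, ∃ A ∈ S.powerset,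
      IsMisestimated g ε i S A B ω} : ℝ) ≤ 72 * (Fintype.card V : ℝ)⁻¹ ^ 12 := by
  let x : ℝ := (Fintype.card V : ℝ)⁻¹
  calc (dens {ω : Samples Cl q | ∃ B ∈ (cluster Cl i).powerset, ∃ A ∈ S.powerset,
        IsMisestimated g ε i S A B ω} : ℝ)
      ≤ ∑ B ∈ (cluster Cl i).powerset,
          (dens {ω : Samples Cl q | ∃ A ∈ S.powerset, IsMisestimated g ε i S A B ω} : ℝ) :=
        dens_filter_exists_mem_le _ _
    _ ≤ ∑ B ∈ (cluster Cl i).powerset, 12 * x ^ (12 + minSide (cluster Cl i) B) :=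
        sum_le_sum fun B hB =>
          dens_exists_isMisestimated_le hε0 hε1 hq0 hq hg hn (mem_powerset.1 hB)
    _ = 12 * x ^ 12 * ∑ B ∈ (cluster Cl i).powerset, x ^ minSide (cluster Cl i) B := by
        rw [mul_sum]
        exact sum_congr rfl fun B _ => by ring
    _ ≤ 12 * x ^ 12 * 6 := by
        gcongr
        exact sum_powerset_inv_pow_minSide_le hn (card_le_univ _)
    _ = 72 * x ^ 12 := by ring

theorem dens_exists_clusters_isMisestimated_le (hε0 : 0 < ε) (hε1 : ε ≤ 1) (hq0 : 0 < q)
    (hq : 2000 * k ^ 2 * Real.log (Fintype.card V) ≤ ε ^ 4 * q) (hg : ∀ u v, |g u v| ≤ 1)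
    (hn : 0 < Fintype.card V) :
    (dens {ω : Samples Cl q | ∃ p ∈ (univ : Finset (Fin k × Fin k)),
      ∃ B ∈ (cluster Cl p.2).powerset, ∃ A ∈ (cluster Cl p.1).powerset,
        IsMisestimated g ε p.2 (cluster Cl p.1) A B ω} : ℝ) ≤
      k ^ 2 * 72 * (Fintype.card V : ℝ)⁻¹ ^ 12 := by
  calc (dens {ω : Samples Cl q | ∃ p ∈ (univ : Finset (Fin k × Fin k)),
        ∃ B ∈ (cluster Cl p.2).powerset, ∃ A ∈ (cluster Cl p.1).powerset,
          IsMisestimated g ε p.2 (cluster Cl p.1) A B ω} : ℝ)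
      ≤ ∑ p : Fin k × Fin k, (dens {ω : Samples Cl q | ∃ B ∈ (cluster Cl p.2).powerset,
          ∃ A ∈ (cluster Cl p.1).powerset, IsMisestimated g ε p.2 (cluster Cl p.1) A B ω} : ℝ) :=
        dens_filter_exists_mem_le _ _
    _ ≤ ∑ _p : Fin k × Fin k, 72 * (Fintype.card V : ℝ)⁻¹ ^ 12 :=
        sum_le_sum fun p _ => dens_exists_exists_isMisestimated_le hε0 hε1 hq0 hq hg hn
    _ = k ^ 2 * 72 * (Fintype.card V : ℝ)⁻¹ ^ 12 := by
        simp only [sum_const, card_univ, Fintype.card_prod, Fintype.card_fin, nsmul_eq_mul,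
          Nat.cast_mul]
        ring

end Misestimation

section JoinCost

variable {V : Type*} {k : ℕ}

/-- The change of the cost of a pair of points separated by the pivotal clustering when another
clustering joins them. It does not depend on the two clusterings. -/
noncomputable def joinCost (G : SimpleGraph V) (u v : V) : ℝ :=
  if G.Adj u v then -1 else 1

theorem abs_joinCost_le (G : SimpleGraph V) (u v : V) : |joinCost G u v| ≤ 1 := by
  rw [joinCost]
  split_ifs <;> simp

theorem fuv_eq_joinCost (G : SimpleGraph V) {Cl Cl' : V → Fin k} {u v : V}
    (hsep : Cl u ≠ Cl v) (hjoin : Cl' u = Cl' v) : fuv G Cl Cl' u v = joinCost G u v := by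
  simp only [fuv, costuv, joinCost, hsep, hjoin, if_true, if_false]
  split_ifs <;> norm_num

theorem samplingError_fuv [Fintype V] {q : ℕ} (G : SimpleGraph V) {Cl : V → Fin k}
    (Cl' : V → Fin k) {i₁ i₂ : Fin k} (hne : i₁ ≠ i₂) (j : Fin k) (ω : Samples Cl q) :
    samplingError (fuv G Cl Cl') i₂ (cluster Cl i₁ ∩ cluster Cl' j)
        (cluster Cl i₂ ∩ cluster Cl' j) ω =
      samplingError (joinCost G) i₂ (cluster Cl i₁ ∩ cluster Cl' j)
        (cluster Cl i₂ ∩ cluster Cl' j) ω := by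
  refine samplingError_congr fun u hu v hv => ?_
  simp only [cluster, mem_inter, mem_filter, mem_univ, true_and] at hu hv
  exact fuv_eq_joinCost G (by rwa [hu.1, hv.1]) (hu.2.trans hv.2.symm)

end JoinCost

theorem stmt15_general {V : Type*} [Fintype V] {k q : ℕ} {Cl : V → Fin k}
    (hCl : Function.Surjective Cl) {ε : ℝ} (hε0 : 0 < ε) (hε1 : ε ≤ 1) (hn : 2 ≤ Fintype.card V)
    (hq : 2000 * (k : ℝ) ^ 2 * Real.log (Fintype.card V) / ε ^ 4 ≤ q) {g : V → V → ℝ}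
    (hg : ∀ u v, |g u v| ≤ 1) :
    1 - (Fintype.card V : ℝ) ^ (-3 : ℤ) ≤
      (dens {ω : Samples Cl q | ∀ i₁ i₂, ∀ A ⊆ cluster Cl i₁, ∀ B ⊆ cluster Cl i₂,
        |samplingError g i₂ A B ω| ≤
          ε * errorScale k (cluster Cl i₁) (cluster Cl i₂) A B} : ℝ) := by
  have hn' : (2 : ℝ) ≤ Fintype.card V := by exact_mod_cast hn
  have hkn : (k : ℝ) ≤ Fintype.card V := by
    exact_mod_cast Fintype.card_fin k ▸ Fintype.card_le_of_surjective Cl hCl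
  obtain ⟨v₀⟩ := Fintype.card_pos_iff.1 (two_pos.trans_le hn)
  have hk : 0 < k := (Cl v₀).pos
  have hlog : 0 < Real.log (Fintype.card V) := Real.log_pos (by linarith)
  have hq0 : 0 < q := by exact_mod_cast (hq.trans_lt' (by positivity) : (0 : ℝ) < q)
  have hq' : 2000 * k ^ 2 * Real.log (Fintype.card V) ≤ ε ^ 4 * q :=
    (div_le_iff₀' (by positivity)).1 hq
  have (i : Fin k) : Nonempty {v : V // Cl v = i} := let ⟨v, hv⟩ := hCl i; ⟨⟨v, hv⟩⟩
  refine one_sub_le_dens_filter ?_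
  calc (dens {ω : Samples Cl q | ¬∀ i₁ i₂, ∀ A ⊆ cluster Cl i₁, ∀ B ⊆ cluster Cl i₂,
        |samplingError g i₂ A B ω| ≤ ε * errorScale k (cluster Cl i₁) (cluster Cl i₂) A B} : ℝ)
      ≤ dens {ω : Samples Cl q | ∃ p ∈ (univ : Finset (Fin k × Fin k)),
          ∃ B ∈ (cluster Cl p.2).powerset, ∃ A ∈ (cluster Cl p.1).powerset,
            IsMisestimated g ε p.2 (cluster Cl p.1) A B ω} := by
        refine dens_filter_le_dens_filter fun ω h => ?_
        push Not at h
        obtain ⟨i₁, i₂, A, hA, B, hB, h⟩ := h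
        exact ⟨(i₁, i₂), mem_univ _, B, mem_powerset.2 hB, A, mem_powerset.2 hA, h⟩
    _ ≤ k ^ 2 * 72 * (Fintype.card V : ℝ)⁻¹ ^ 12 :=
        dens_exists_clusters_isMisestimated_le hε0 hε1 hq0 hq' hg (two_pos.trans_le hn)
    _ ≤ Fintype.card V ^ 2 * Fintype.card V ^ 7 * (Fintype.card V : ℝ)⁻¹ ^ 12 := by
        gcongr
        linarith [pow_le_pow_left₀ zero_le_two hn' 7]
    _ = (Fintype.card V : ℝ) ^ (-3 : ℤ) := by
        rw [zpow_neg]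
        field_simp

/-- Lemma 2 of the paper.  There is a universal constant `c₂ > 0` such
that the following holds.  Let `ε ∈ (0,1)`, `|V| = n ≥ 2`, and let `q` be an integer with
`q ≥ c₂ k² (log n)/ε⁴`.  Fix a pivotal `k`-clustering `C` (assignment `Cl`) with all
clusters nonempty (so that uniform sampling from each `C_{i₂}` is well defined).  For each
`i₂ ∈ [k]` and `u ∈ V`, the sample `S_{u i₂}` consists of `q` points drawn independently
and uniformly with replacement from `C_{i₂}`; the family of samples is a uniform element
`ω` of `Ω = Π (u : V) (i₂ : Fin k), Fin q → C_{i₂}`.  Then with probability at least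
`1 − n⁻³`, simultaneously for all `k`-clusterings `C'` and all `i₁ < i₂`, `j` in `[k]`:
`|F_{i₁,i₂,j}(C') − F̂_{i₁,i₂,j}(C')|
  ≤ ε·max{|C_{i₁j} × C_{i₂j}|, |C_{i₁j} × (C_{i₁}\C_{i₁j})|/k, |C_{i₂j} × (C_{i₂}\C_{i₂j})|/k}`. -/
theorem stmt15 :
    ∃ c₂ : ℝ, 0 < c₂ ∧
      ∀ (V : Type) [Fintype V] (k q : ℕ) (G : SimpleGraph V) (Cl : V → Fin k),
        (∀ i : Fin k, ∃ v : V, Cl v = i) →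
        ∀ ε : ℝ, 0 < ε → ε < 1 → 2 ≤ Fintype.card V →
        c₂ * (k : ℝ) ^ 2 * Real.log (Fintype.card V) / ε ^ 4 ≤ (q : ℝ) →
        1 - (Fintype.card V : ℝ) ^ (-3 : ℤ) ≤
          ((Finset.univ.filter fun ω : ∀ _u : V, ∀ i₂ : Fin k, Fin q → {v : V // Cl v = i₂} =>
              ∀ (Cl' : V → Fin k) (i₁ i₂ j : Fin k), i₁ < i₂ →
                |(∑ u ∈ cluster Cl i₁ ∩ cluster Cl' j,
                      ∑ v ∈ cluster Cl i₂ ∩ cluster Cl' j, fuv G Cl Cl' u v)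
                  - ((cluster Cl i₂).card : ℝ) / (q : ℝ) *
                      ∑ u ∈ cluster Cl i₁ ∩ cluster Cl' j, ∑ s : Fin q,
                        if (ω u i₂ s).1 ∈ cluster Cl i₂ ∩ cluster Cl' j then
                          fuv G Cl Cl' u (ω u i₂ s).1
                        else 0|
                ≤ ε * max
                    (((cluster Cl i₁ ∩ cluster Cl' j).card : ℝ) *
                      ((cluster Cl i₂ ∩ cluster Cl' j).card : ℝ))
                    (max
                      (((cluster Cl i₁ ∩ cluster Cl' j).card : ℝ) *
                          ((cluster Cl i₁ \ (cluster Cl i₁ ∩ cluster Cl' j)).card : ℝ) / (k : ℝ))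
                      (((cluster Cl i₂ ∩ cluster Cl' j).card : ℝ) *
                          ((cluster Cl i₂ \ (cluster Cl i₂ ∩ cluster Cl' j)).card : ℝ) / (k : ℝ)))).card : ℝ)
            / (Fintype.card (∀ _u : V, ∀ i₂ : Fin k, Fin q → {v : V // Cl v = i₂}) : ℝ) := by
  refine ⟨2000, by norm_num, fun V _ k q G Cl hCl ε hε0 hε1 hn hq => ?_⟩
  rw [← nnratCast_dens]
  exact (stmt15_general hCl hε0 hε1.le hn hq (abs_joinCost_le G)).trans <|
    dens_filter_le_dens_filter fun ω h Cl' i₁ i₂ j hij =>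
      (congrArg abs (samplingError_fuv G Cl' hij.ne j ω)).trans_le
        (h i₁ i₂ _ inter_subset_left _ inter_subset_left)
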